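/- Let d ≥ 1, let ρ, ρ₁ : ℝ^d → ℝ be continuously differentiable with ρ(x) > 0 and ρ₁(x) > 0 for all x, and let b_irr : ℝ^d → ℝ^d be continuously differentiable, compactly supported, and satisfy ∇·(b_irr ρ)(x) = 0 for all x ∈ ℝ^d. Then ∫ (log(ρ₁(x)/ρ(x)) + 1) · ∇·(b_irr ρ₁)(x) dx = 0. -/

import Mathlib

open MeasureTheory

/-- The `i`-th partial derivative of `f : (ι → ℝ) → ℝ` at `x`. -/
noncomputable def pd {ι : Type*} [Fintype ι] [DecidableEq ι] (i : ι)
    (f : (ι → ℝ) → ℝ) (x : ι → ℝ) : ℝ :=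
  fderiv ℝ f x (Pi.single i 1)

/-!
Write `u = b_irr ρ` and `r = ρ₁ / ρ`, so that `b_irr ρ₁ = r u` and `log r + 1 = φ' (r)` for
`φ s = s log s`. Since `u` is divergence free, `φ' (r) ∇·(r u) = φ' (r) ∇r·u = ∇(φ ∘ r)·u =
∇·(φ(r) u)`, and the divergence of a compactly supported field integrates to zero.
-/

section IntegralFDeriv

variable {E F : Type*} [NormedAddCommGroup E] [NormedSpace ℝ E]
  [NormedAddCommGroup F] [NormedSpace ℝ F] [MeasurableSpace E] [BorelSpace E]
  {μ : Measure E} {f : E → F}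

lemma integrable_fderiv_apply_of_hasCompactSupport [IsFiniteMeasureOnCompacts μ]
    (hf : ContDiff ℝ 1 f) (hc : HasCompactSupport f) (v : E) :
    Integrable (fun x => fderiv ℝ f x v) μ :=
  ((hf.continuous_fderiv one_ne_zero).clm_apply continuous_const).integrable_of_hasCompactSupport
    (hc.fderiv_apply ℝ v)

lemma integral_fderiv_apply_eq_zero_of_hasCompactSupport [FiniteDimensional ℝ E]
    [μ.IsAddHaarMeasure] (hf : ContDiff ℝ 1 f) (hc : HasCompactSupport f) (v : E) :
    ∫ x, fderiv ℝ f x v ∂μ = 0 := by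
  have by_parts := integral_smul_fderiv_eq_neg_fderiv_smul_of_integrable (𝕜 := ℝ) (μ := μ)
    (f := fun _ => (1 : ℝ)) (g := f) (v := v) (by simp)
    (by simpa only [one_smul] using integrable_fderiv_apply_of_hasCompactSupport hf hc v)
    (by simpa only [one_smul] using hf.continuous.integrable_of_hasCompactSupport hc)
    (fun x _ => differentiableAt_const 1) (fun x _ => hf.differentiable one_ne_zero x)
  simpa using by_parts

end IntegralFDeriv

section Divergence

variable {ι : Type*} [Fintype ι] [DecidableEq ι]

/-- The divergence `∇·v` of a vector field on `ι → ℝ`, computed in coordinates. -/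
noncomputable def divergence (v : (ι → ℝ) → ι → ℝ) (x : ι → ℝ) : ℝ :=
  ∑ i, pd i (fun y => v y i) x

lemma pd_mul {f g : (ι → ℝ) → ℝ} {x : ι → ℝ} (hf : DifferentiableAt ℝ f x)
    (hg : DifferentiableAt ℝ g x) (i : ι) :
    pd i (fun y => f y * g y) x = f x * pd i g x + g x * pd i f x := by
  simp [pd, fderiv_fun_mul hf hg]

lemma pd_comp {φ : ℝ → ℝ} {r : (ι → ℝ) → ℝ} {x : ι → ℝ} (hφ : DifferentiableAt ℝ φ (r x))
    (hr : DifferentiableAt ℝ r x) (i : ι) :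
    pd i (fun y => φ (r y)) x = deriv φ (r x) * pd i r x := by
  have chain : HasFDerivAt (fun y => φ (r y)) (deriv φ (r x) • fderiv ℝ r x) x :=
    hφ.hasDerivAt.comp_hasFDerivAt x hr.hasFDerivAt
  simp [pd, chain.fderiv]

lemma divergence_smul {g : (ι → ℝ) → ℝ} {u : (ι → ℝ) → ι → ℝ} {x : ι → ℝ}
    (hg : DifferentiableAt ℝ g x) (hu : DifferentiableAt ℝ u x) :
    divergence (fun y => g y • u y) x = g x * divergence u x + ∑ i, u x i * pd i g x := by
  simp only [divergence, Pi.smul_apply, smul_eq_mul, Finset.mul_sum, ← Finset.sum_add_distrib]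
  exact Finset.sum_congr rfl fun i _ => pd_mul hg (differentiableAt_pi.1 hu i) i

lemma deriv_mul_divergence_smul {φ : ℝ → ℝ} {r : (ι → ℝ) → ℝ} {u : (ι → ℝ) → ι → ℝ}
    {x : ι → ℝ} (hφ : DifferentiableAt ℝ φ (r x)) (hr : DifferentiableAt ℝ r x)
    (hu : DifferentiableAt ℝ u x) (hdiv : divergence u x = 0) :
    deriv φ (r x) * divergence (fun y => r y • u y) x =
      divergence (fun y => φ (r y) • u y) x := by
  have hφr : DifferentiableAt ℝ (fun y => φ (r y)) x := hφ.comp x hr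
  calc deriv φ (r x) * divergence (fun y => r y • u y) x
      = deriv φ (r x) * ∑ i, u x i * pd i r x := by
        rw [divergence_smul hr hu, hdiv, mul_zero, zero_add]
    _ = ∑ i, u x i * pd i (fun y => φ (r y)) x := by
        simp only [pd_comp hφ hr, Finset.mul_sum, mul_left_comm]
    _ = divergence (fun y => φ (r y) • u y) x := by
        rw [divergence_smul hφr hu, hdiv, mul_zero, zero_add]

variable {μ : Measure (ι → ℝ)} [μ.IsAddHaarMeasure]

lemma integral_divergence_eq_zero_of_hasCompactSupport {v : (ι → ℝ) → ι → ℝ}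
    (hv : ContDiff ℝ 1 v) (hc : HasCompactSupport v) : ∫ x, divergence v x ∂μ = 0 := by
  have hvi (i : ι) : ContDiff ℝ 1 fun y => v y i := contDiff_pi.1 hv i
  have hci (i : ι) : HasCompactSupport fun y => v y i :=
    hc.comp_left (g := fun w : ι → ℝ => w i) rfl
  simp only [divergence, pd]
  rw [integral_finsetSum _ fun i _ =>
    integrable_fderiv_apply_of_hasCompactSupport (hvi i) (hci i) _]
  exact Finset.sum_eq_zero fun i _ =>
    integral_fderiv_apply_eq_zero_of_hasCompactSupport (hvi i) (hci i) _

lemma integral_deriv_mul_divergence_smul_eq_zero {φ : ℝ → ℝ} {r : (ι → ℝ) → ℝ}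
    {u : (ι → ℝ) → ι → ℝ} (hr : ContDiff ℝ 1 r) (hφ : ∀ x, ContDiffAt ℝ 1 φ (r x))
    (hu : ContDiff ℝ 1 u) (hc : HasCompactSupport u) (hdiv : ∀ x, divergence u x = 0) :
    ∫ x, deriv φ (r x) * divergence (fun y => r y • u y) x ∂μ = 0 := by
  have hφr : ContDiff ℝ 1 fun x => φ (r x) :=
    contDiff_iff_contDiffAt.2 fun x => (hφ x).comp x hr.contDiffAt
  have pointwise (x : ι → ℝ) : deriv φ (r x) * divergence (fun y => r y • u y) x =
      divergence (fun y => φ (r y) • u y) x :=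
    deriv_mul_divergence_smul ((hφ x).differentiableAt one_ne_zero)
      (hr.differentiable one_ne_zero x) (hu.differentiable one_ne_zero x) (hdiv x)
  simp only [pointwise]
  exact integral_divergence_eq_zero_of_hasCompactSupport (hφr.smul hu) (hc.smul_left (f := φ ∘ r))

/-- The factor `φ' (ρ₁ / ρ)` is the derivative in `ρ₁` of the `φ`-divergence `∫ φ (ρ₁ / ρ) ρ`. -/
theorem generic_orthogonality_general {φ : ℝ → ℝ} {ρ ρ₁ : (ι → ℝ) → ℝ} {b : (ι → ℝ) → ι → ℝ}
    (hρ : ContDiff ℝ 1 ρ) (hρ0 : ∀ x, ρ x ≠ 0) (hρ₁ : ContDiff ℝ 1 ρ₁)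
    (hφ : ∀ x, ContDiffAt ℝ 1 φ (ρ₁ x / ρ x)) (hb : ContDiff ℝ 1 b) (hbc : HasCompactSupport b)
    (hdiv : ∀ x, divergence (fun y => ρ y • b y) x = 0) :
    ∫ x, deriv φ (ρ₁ x / ρ x) * divergence (fun y => ρ₁ y • b y) x ∂μ = 0 := by
  have flux_eq : (fun y => (ρ₁ y / ρ y) • ρ y • b y) = fun y => ρ₁ y • b y :=
    funext fun y => by rw [smul_smul, div_mul_cancel₀ _ (hρ0 y)]
  rw [← flux_eq]
  exact integral_deriv_mul_divergence_smul_eq_zero (hρ₁.div hρ hρ0) hφ (hρ.smul hb)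
    (hbc.smul_left (f := ρ)) hdiv

end Divergence

/-- **Orthogonality relation in the GENERIC decomposition of the Fokker–Planck
equation.** If the compactly supported `C¹` vector field `b_irr` satisfies
`∇·(b_irr ρ) = 0` for the positive `C¹` density `ρ`, then for any positive `C¹`
density `ρ₁`, `∫ (log(ρ₁/ρ) + 1) ∇·(b_irr ρ₁) dx = 0`. -/
theorem generic_orthogonality (d : ℕ) (hd : 1 ≤ d)
    (ρ ρ₁ : (Fin d → ℝ) → ℝ)
    (hρ : ContDiff ℝ 1 ρ) (hρpos : ∀ x, 0 < ρ x)
    (hρ₁ : ContDiff ℝ 1 ρ₁) (hρ₁pos : ∀ x, 0 < ρ₁ x)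
    (birr : (Fin d → ℝ) → (Fin d → ℝ))
    (hbirr : ∀ i, ContDiff ℝ 1 (fun x => birr x i))
    (hbc : HasCompactSupport birr)
    (hdiv : ∀ x, ∑ i, pd i (fun y => birr y i * ρ y) x = 0) :
    ∫ x, (Real.log (ρ₁ x / ρ x) + 1) * (∑ i, pd i (fun y => birr y i * ρ₁ y) x) = 0 := by
  have hr0 (x) : ρ₁ x / ρ x ≠ 0 := (div_pos (hρ₁pos x) (hρpos x)).ne'
  have flux_eq (f : (Fin d → ℝ) → ℝ) (x) :
      divergence (fun y => f y • birr y) x = ∑ i, pd i (fun y => birr y i * f y) x := by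
    simp only [divergence, Pi.smul_apply, smul_eq_mul, mul_comm]
  have conservation := generic_orthogonality_general (μ := volume) (φ := fun s => s * Real.log s)
    hρ (fun x => (hρpos x).ne') hρ₁ (fun x => contDiffAt_id.mul (Real.contDiffAt_log.2 (hr0 x)))
    (contDiff_pi.2 hbirr) hbc fun x => (flux_eq ρ x).trans (hdiv x)
  simpa only [Real.deriv_mul_log (hr0 _), flux_eq] using conservation
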